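/- Let g = m ⋈_θ h be a cocycle double cross sum Lie algebra (bicocycle double cross sum with γ = 0), and let Ũ(m) := U(g)/U(g)U(h)⁺ where U(h)⁺ = ker ε ∩ U(h). Then the multiplication map Ũ(m) ⊗ U(h) → U(g) induced by a PBW basis adapted to the decomposition g = m ⊕ h is an isomorphism of coalgebras, and consequently U(m ⋈_θ h) ≅ Ũ(m) ⋈_θ U(h) as bialgebras, a cocycle double cross product bialgebra. -/

import Mathlib

open TensorProduct LinearMap

set_option synthInstance.maxHeartbeats 2000000
set_option maxHeartbeats 4000000

section

variable (k : Type*) [Field k]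

/-- Sweedler pairing: `(a ⊗ b) ↦ u(a₍₁₎ ⊗ b₍₁₎) ⊗ v(a₍₂₎ ⊗ b₍₂₎)`. -/
noncomputable def sweedlerPair {A B C D : Type*}
    [AddCommGroup A] [Module k A] [AddCommGroup B] [Module k B]
    [AddCommGroup C] [Module k C] [AddCommGroup D] [Module k D]
    (dA : A →ₗ[k] A ⊗[k] A) (dB : B →ₗ[k] B ⊗[k] B)
    (u : A ⊗[k] B →ₗ[k] C) (v : A ⊗[k] B →ₗ[k] D) :
    A ⊗[k] B →ₗ[k] C ⊗[k] D :=
  (TensorProduct.map u v) ∘ₗ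
    (TensorProduct.tensorTensorTensorComm k A A B B).toLinearMap ∘ₗ
    (TensorProduct.map dA dB)

/-- The multiplication of the (right) cocycle double cross product
`(x⊗h)(x'⊗h') = x₍₁₎·(h₍₁₎▷x'₍₁₎) ⊗ θ(x₍₂₎, h₍₂₎▷x'₍₂₎) ψ(h₍₃₎, x'₍₃₎) h'`. -/
noncomputable def cdcpMul (M H : Type*)
    [AddCommGroup M] [Module k M] [AddCommGroup H] [Module k H]
    (dM : M →ₗ[k] M ⊗[k] M) (dH : H →ₗ[k] H ⊗[k] H)
    (act : H ⊗[k] M →ₗ[k] M) (psi : H ⊗[k] M →ₗ[k] H)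
    (mM : M ⊗[k] M →ₗ[k] M) (th : M ⊗[k] M →ₗ[k] H)
    (mH : H ⊗[k] H →ₗ[k] H) :
    (M ⊗[k] H) ⊗[k] (M ⊗[k] H) →ₗ[k] M ⊗[k] H :=
  letI Θ : H ⊗[k] M →ₗ[k] M ⊗[k] (M ⊗[k] H) :=
    sweedlerPair k dH dM act (sweedlerPair k dH dM act psi)
  letI R : M ⊗[k] ((M ⊗[k] H) ⊗[k] H) →ₗ[k] H :=
    mH ∘ₗ (LinearMap.rTensor H mH) ∘ₗ
      (LinearMap.rTensor H (LinearMap.rTensor H th)) ∘ₗ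
      (LinearMap.rTensor H ((TensorProduct.assoc k M M H).symm.toLinearMap)) ∘ₗ
      (TensorProduct.assoc k M (M ⊗[k] H) H).symm.toLinearMap
  (TensorProduct.map mM R) ∘ₗ
    (TensorProduct.tensorTensorTensorComm k M M M ((M ⊗[k] H) ⊗[k] H)).toLinearMap ∘ₗ
    (LinearMap.lTensor (M ⊗[k] M)
      ((TensorProduct.assoc k M (M ⊗[k] H) H).toLinearMap)) ∘ₗ
    (LinearMap.lTensor (M ⊗[k] M) (LinearMap.rTensor H Θ)) ∘ₗ
    (LinearMap.lTensor (M ⊗[k] M) ((TensorProduct.assoc k H M H).symm.toLinearMap)) ∘ₗ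
    (TensorProduct.assoc k (M ⊗[k] M) H (M ⊗[k] H)).toLinearMap ∘ₗ
    (LinearMap.rTensor (M ⊗[k] H) (LinearMap.rTensor H dM))

end

set_option linter.unusedSectionVars false

namespace PBW

variable {F : Type*} [Field F] {g : Type*} [LieRing g] [LieAlgebra F g]
  {I : Type*} [LinearOrder I] (b : Module.Basis I F g)

/-- One step of the recursive definition of the PBW action. -/
noncomputable def stepFun (A : g →ₗ[F] Module.End F (Multiset I →₀ F)) (i : I)
    (M : Multiset I) : Multiset I →₀ F :=
  match M.sort (· ≤ ·) with
  | [] => Finsupp.single (i ::ₘ M) 1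
  | j :: l => if i ≤ j then Finsupp.single (i ::ₘ M) 1 else
      Finsupp.single (i ::ₘ M) 1
        + A (b j) (A (b i) (Finsupp.single (l : Multiset I) 1)
            - Finsupp.single (i ::ₘ (l : Multiset I)) 1)
        + A ⁅b i, b j⁆ (Finsupp.single (l : Multiset I) 1)

/-- The recursive step as a linear map. -/
noncomputable def step (A : g →ₗ[F] Module.End F (Multiset I →₀ F)) :
    g →ₗ[F] Module.End F (Multiset I →₀ F) :=
  b.constr F fun i => Finsupp.linearCombination F (stepFun b A i)

/-- Truncated actions. -/
noncomputable def act : ℕ → (g →ₗ[F] Module.End F (Multiset I →₀ F))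
  | 0 => step b 0
  | d + 1 => step b (act d)

theorem step_apply (A : g →ₗ[F] Module.End F (Multiset I →₀ F)) (i : I) (M : Multiset I) :
    step b A (b i) (Finsupp.single M 1) = stepFun b A i M := by
  simp [step, Module.Basis.constr_basis]

theorem stepFun_le (A : g →ₗ[F] Module.End F (Multiset I →₀ F)) (i : I) (M : Multiset I)
    (h : ∀ j ∈ M, i ≤ j) : stepFun b A i M = Finsupp.single (i ::ₘ M) 1 := by
  unfold stepFun
  split
  · rfl
  · rename_i j l hl
    have : j ∈ M := by rw [← Multiset.mem_sort (r := (· ≤ ·)), hl]; simp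
    rw [if_pos (h j this)]

theorem stepFun_gt (A : g →ₗ[F] Module.End F (Multiset I →₀ F)) (i j : I) (N : Multiset I)
    (h : ∀ z ∈ N, j ≤ z) (hij : j < i) : stepFun b A i (j ::ₘ N) =
      Finsupp.single (i ::ₘ j ::ₘ N) 1
        + A (b j) (A (b i) (Finsupp.single N 1) - Finsupp.single (i ::ₘ N) 1)
        + A ⁅b i, b j⁆ (Finsupp.single N 1) := by
  unfold stepFun
  rw [Multiset.sort_cons _ _ _ h]
  simp [not_le.2 hij]

theorem exists_min (M : Multiset I) (i : I) (h : ¬ ∀ j ∈ M, i ≤ j) :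
    ∃ j N, M = j ::ₘ N ∧ (∀ z ∈ N, j ≤ z) ∧ j < i := by
  have hs := Multiset.pairwise_sort M (· ≤ ·)
  have he := Multiset.sort_eq M (· ≤ ·)
  cases hl : M.sort (· ≤ ·) with
  | nil => rw [hl] at he; subst he; simp at h
  | cons j l =>
    rw [hl] at he hs
    rw [List.pairwise_cons] at hs
    refine ⟨j, l, he.symm, by simpa using hs.1, ?_⟩
    by_contra hc
    apply h
    rw [← he]
    intro z hz
    rw [not_lt] at hc
    simp only [Multiset.mem_coe, List.mem_cons] at hz
    rcases hz with rfl | hz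
    · exact hc
    · exact hc.trans (hs.1 z hz)

/-- Degree filtration. -/
noncomputable def D (F I : Type*) [Field F] (n : ℕ) : Submodule F (Multiset I →₀ F) :=
  Submodule.span F {v | ∃ M : Multiset I, M.card ≤ n ∧ v = Finsupp.single M 1}

theorem D_mono {n m : ℕ} (h : n ≤ m) : D F I n ≤ D F I m :=
  Submodule.span_mono fun _ ⟨M, hM, e⟩ => ⟨M, hM.trans h, e⟩

theorem mem_D {n : ℕ} {M : Multiset I} (h : M.card ≤ n) :
    (Finsupp.single M 1 : Multiset I →₀ F) ∈ D F I n :=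
  Submodule.subset_span ⟨M, h, rfl⟩

theorem D_exists (v : Multiset I →₀ F) : ∃ n, v ∈ D F I n := by
  induction v using Finsupp.induction_linear with
  | zero => exact ⟨0, zero_mem _⟩
  | add x y hx hy =>
    obtain ⟨n, hn⟩ := hx
    obtain ⟨m, hm⟩ := hy
    exact ⟨max n m, add_mem (D_mono (le_max_left _ _) hn) (D_mono (le_max_right _ _) hm)⟩
  | single M c =>
    refine ⟨M.card, ?_⟩
    rw [← mul_one c, ← smul_eq_mul, ← Finsupp.smul_single]
    exact Submodule.smul_mem _ _ (mem_D le_rfl)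

theorem basis_ind {P : g → Prop} (h0 : P 0) (hadd : ∀ x y, P x → P y → P (x + y))
    (hsmul : ∀ (c : F) x, P x → P (c • x)) (hb : ∀ i, P (b i)) (x : g) : P x := by
  have : x ∈ Submodule.span F (Set.range b) := by rw [b.span_eq]; trivial
  induction this using Submodule.span_induction with
  | mem x h => obtain ⟨i, rfl⟩ := h; exact hb i
  | zero => exact h0
  | add x y _ _ hx hy => exact hadd x y hx hy
  | smul c x _ hx => exact hsmul c x hx

/-- extend degree control -/
theorem map_D (A : g →ₗ[F] Module.End F (Multiset I →₀ F)) (n : ℕ)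
    (h : ∀ i (M : Multiset I), M.card ≤ n → A (b i) (Finsupp.single M 1) -
      Finsupp.single (i ::ₘ M) 1 ∈ D F I M.card) (x : g) (m : ℕ) (hm : m ≤ n)
      (v) (hv : v ∈ D F I m) : A x v ∈ D F I (m + 1) := by
  induction hv using Submodule.span_induction with
  | mem v hv =>
    obtain ⟨M, hM, rfl⟩ := hv
    induction x using basis_ind b with
    | h0 => simp
    | hadd x y hx hy => simpa using add_mem hx hy
    | hsmul c x hx => simpa using Submodule.smul_mem _ c hx
    | hb i =>
      have h1 := h i M (hM.trans hm)
      have h2 := add_mem (D_mono (hM.trans (Nat.le_succ _)) h1)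
        (mem_D (F := F) (M := i ::ₘ M) (n := m+1) (by simpa using hM))
      simpa using h2
  | zero => simp
  | add x y _ _ hx hy => rw [map_add]; exact add_mem hx hy
  | smul c x _ hx => rw [map_smul]; exact Submodule.smul_mem _ c hx

/-- extend stability -/
theorem eq_D (A A' : g →ₗ[F] Module.End F (Multiset I →₀ F)) (n : ℕ)
    (h : ∀ i (M : Multiset I), M.card ≤ n → A (b i) (Finsupp.single M 1) =
      A' (b i) (Finsupp.single M 1)) (x : g)
      (v) (hv : v ∈ D F I n) : A x v = A' x v := by
  induction hv using Submodule.span_induction with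
  | mem v hv =>
    obtain ⟨M, hM, rfl⟩ := hv
    induction x using basis_ind b with
    | h0 => simp
    | hadd x y hx hy => simp [hx, hy]
    | hsmul c x hx => simp [hx]
    | hb i => exact h i M hM
  | zero => simp
  | add x y _ _ hx hy => rw [map_add, map_add, hx, hy]
  | smul c x _ hx => rw [map_smul, map_smul, hx]

theorem act_succ (d : ℕ) (i : I) (M : Multiset I) :
    act b (d + 1) (b i) (Finsupp.single M 1) = stepFun b (act b d) i M := step_apply b _ i M

theorem act_le (d : ℕ) (i : I) (M : Multiset I) (h : ∀ j ∈ M, i ≤ j) :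
    act b d (b i) (Finsupp.single M 1) = Finsupp.single (i ::ₘ M) 1 := by
  cases d <;> rw [act, step_apply, stepFun_le _ _ _ _ h]

theorem act_stable (d : ℕ) : ∀ (i : I) (M : Multiset I), M.card ≤ d →
    act b d (b i) (Finsupp.single M 1) - Finsupp.single (i ::ₘ M) 1 ∈ D F I M.card ∧
    act b (d + 1) (b i) (Finsupp.single M 1) = act b d (b i) (Finsupp.single M 1) := by
  induction d with
  | zero =>
    intro i M hM
    have : M = 0 := by simpa using hM
    subst this
    rw [act_le _ _ _ _ (by simp), act_le _ _ _ _ (by simp)]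
    simp
  | succ d ih =>
    intro i M hM
    by_cases hle : ∀ j ∈ M, i ≤ j
    · rw [act_le _ _ _ _ hle, act_le _ _ _ _ hle]
      simp
    obtain ⟨j, N, rfl, hN, hji⟩ := exists_min M i hle
    have hN' : N.card ≤ d := by simpa using hM
    have ih1 := fun i M h => (ih i M h).1
    have ih2 := fun i M h => (ih i M h).2
    have hw := ih1 i N hN'
    constructor
    · rw [act_succ, stepFun_gt _ _ _ _ _ hN hji, Multiset.card_cons]
      have h1 := map_D b (act b d) d ih1 (b j) N.card hN' _ hw
      have h2 := map_D b (act b d) d ih1 ⁅b i, b j⁆ N.card hN' _ (mem_D (M := N) le_rfl)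
      have := add_mem h1 h2
      convert this using 1
      abel
    · rw [act_succ, act_succ, stepFun_gt _ _ _ _ _ hN hji, stepFun_gt _ _ _ _ _ hN hji]
      rw [ih2 i N hN']
      rw [eq_D b _ _ d ih2 (b j) _ (D_mono hN' hw)]
      rw [eq_D b _ _ d ih2 ⁅b i, b j⁆ _ (mem_D hN')]

/-- The PBW action. -/
noncomputable def A : g →ₗ[F] Module.End F (Multiset I →₀ F) :=
  b.constr F fun i => Finsupp.linearCombination F
    fun M => act b M.card (b i) (Finsupp.single M 1)

theorem A_apply (i : I) (M : Multiset I) :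
    A b (b i) (Finsupp.single M 1) = act b M.card (b i) (Finsupp.single M 1) := by
  simp [A, Module.Basis.constr_basis]

theorem act_eq (i : I) (M : Multiset I) (d : ℕ) (h : M.card ≤ d) :
    act b d (b i) (Finsupp.single M 1) = A b (b i) (Finsupp.single M 1) := by
  induction d, h using Nat.le_induction with
  | base => rw [A_apply]
  | succ d hd ih => rw [(act_stable b d i M hd).2, ih]

theorem A_D (i : I) (M : Multiset I) :
    A b (b i) (Finsupp.single M 1) - Finsupp.single (i ::ₘ M) 1 ∈ D F I M.card := by
  rw [A_apply]; exact (act_stable b _ i M le_rfl).1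

theorem A_le (i : I) (M : Multiset I) (h : ∀ j ∈ M, i ≤ j) :
    A b (b i) (Finsupp.single M 1) = Finsupp.single (i ::ₘ M) 1 := by
  rw [A_apply, act_le _ _ _ _ h]

theorem A_gt (i j : I) (N : Multiset I) (h : ∀ z ∈ N, j ≤ z) (hij : j < i) :
    A b (b i) (Finsupp.single (j ::ₘ N) 1) =
      A b (b j) (A b (b i) (Finsupp.single N 1)) + A b ⁅b i, b j⁆ (Finsupp.single N 1) := by
  rw [A_apply, Multiset.card_cons, act_succ, stepFun_gt _ _ _ _ _ h hij]
  have key := fun i M h => act_eq b i M N.card h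
  rw [key i N le_rfl, eq_D b _ _ N.card key (b j) _ (A_D b i N),
    eq_D b _ _ N.card key _ _ (mem_D le_rfl), map_sub, A_le b j (i ::ₘ N), Multiset.cons_swap]
  · abel
  · intro z hz
    rcases Multiset.mem_cons.1 hz with rfl | hz
    · exact hij.le
    · exact h z hz

/-- bilinear extension of the commutation relation -/
theorem comm_ext (v : Multiset I →₀ F)
    (h : ∀ i j, j < i → A b (b i) (A b (b j) v) = A b (b j) (A b (b i) v) + A b ⁅b i, b j⁆ v)
    (x y : g) : A b x (A b y v) = A b y (A b x v) + A b ⁅x, y⁆ v := by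
  induction x using basis_ind b with
  | h0 => simp
  | hadd x x' hx hx' => simp only [map_add, LinearMap.add_apply, hx, hx', add_lie]; abel
  | hsmul c x hx => simp only [map_smul, LinearMap.smul_apply, hx, smul_lie, smul_add]
  | hb i =>
    induction y using basis_ind b with
    | h0 => simp
    | hadd x x' hx hx' => simp only [map_add, LinearMap.add_apply, hx, hx', lie_add]; abel
    | hsmul c x hx => simp only [map_smul, LinearMap.smul_apply, hx, lie_smul, smul_add]
    | hb j =>
      rcases lt_trichotomy i j with hij | rfl | hij
      · rw [h j i hij, ← lie_skew (b i) (b j), map_neg, LinearMap.neg_apply]; abel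
      · simp
      · exact h i j hij

theorem A_comm_aux (n : ℕ) : ∀ v ∈ D F I n, ∀ x y : g,
    A b x (A b y v) = A b y (A b x v) + A b ⁅x, y⁆ v := by
  induction n using Nat.strong_induction_on with
  | _ n ih =>
  intro v hv
  induction hv using Submodule.span_induction with
  | zero => intro x y; simp
  | add v w _ _ hx hy => intro x y; simp only [map_add, hx x y, hy x y]; abel
  | smul c v _ hx => intro x y; simp only [map_smul, hx x y, smul_add]
  | mem v hv =>
  obtain ⟨N, hNn, rfl⟩ := hv
  apply comm_ext
  intro i j hji
  by_cases hle : ∀ z ∈ N, j ≤ z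
  · rw [A_le b j N hle, A_gt b i j N hle hji]
  obtain ⟨k, P, rfl, hP, hkj⟩ := exists_min N j hle
  have hPn : P.card < n := by rw [Multiset.card_cons] at hNn; omega
  have hki : k < i := hkj.trans hji
  have key : ∀ i j, k < i → k < j → A b (b i) (A b (b k) (A b (b j) (Finsupp.single P 1))) =
      A b (b k) (A b (b i) (A b (b j) (Finsupp.single P 1)))
        + A b ⁅b i, b k⁆ (A b (b j) (Finsupp.single P 1)) := by
    intro i j hi hj
    obtain ⟨w, hw, hww⟩ : ∃ w ∈ D F I P.card, A b (b j) (Finsupp.single P 1) =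
      Finsupp.single (j ::ₘ P) 1 + w := ⟨_, A_D b j P, by abel⟩
    rw [hww]
    have hle' : ∀ z ∈ j ::ₘ P, k ≤ z := by
      intro z hz
      rcases Multiset.mem_cons.1 hz with rfl | hz
      · exact hj.le
      · exact hP z hz
    simp only [map_add]
    rw [ih _ hPn w hw, A_le b k _ hle', A_gt b i k _ hle' hi]
    abel
  have ihP := fun x y => ih _ hPn (Finsupp.single P 1) (mem_D le_rfl) x y
  rw [A_gt b j k P hP hkj, A_gt b i k P hP hki]
  simp only [map_add]
  rw [key i j hki hkj, key j i hkj hki, ihP (b i) (b j), map_add, ihP (b k) ⁅b i, b j⁆ ,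
    ihP (b i) ⁅b j, b k⁆, ihP (b j) ⁅b i, b k⁆]
  have hk : (Finsupp.single (k ::ₘ P) 1 : Multiset I →₀ F) = A b (b k) (Finsupp.single P 1) :=
    (A_le b k P hP).symm
  have jac : A b ⁅b i, ⁅b j, b k⁆⁆ = A b ⁅b j, ⁅b i, b k⁆⁆ - A b ⁅b k, ⁅b i, b j⁆⁆ := by
    rw [leibniz_lie (b i) (b j) (b k), ← lie_skew (b k) ⁅b i, b j⁆, map_add, map_neg]; abel
  rw [hk, jac, LinearMap.sub_apply]
  abel

theorem A_comm (x y : g) (v : Multiset I →₀ F) :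
    A b x (A b y v) = A b y (A b x v) + A b ⁅x, y⁆ v := by
  obtain ⟨n, hn⟩ := D_exists v
  exact A_comm_aux b n v hn x y

/-- Product of a word in the enveloping algebra. -/
noncomputable def word (l : List I) : (UniversalEnvelopingAlgebra F g) :=
  (l.map fun i => UniversalEnvelopingAlgebra.ι F (b i)).prod

/-- The ordered monomial. -/
noncomputable def mon (M : Multiset I) : (UniversalEnvelopingAlgebra F g) := word b (M.sort (· ≤ ·))

section
attribute [local instance] LieRing.ofAssociativeRing

/-- The PBW action as a Lie algebra morphism. -/
noncomputable def ALie : g →ₗ⁅F⁆ Module.End F (Multiset I →₀ F) :=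
  { A b with
    map_lie' := by
      intro x y
      ext1 M
      ext1
      have := A_comm b x y (Finsupp.single M 1)
      simp [LieRing.of_associative_ring_bracket, this] }

/-- The PBW representation of the enveloping algebra -/
noncomputable def rep : (UniversalEnvelopingAlgebra F g) →ₐ[F] Module.End F (Multiset I →₀ F) :=
  UniversalEnvelopingAlgebra.lift F (ALie b)

theorem rep_ι (x : g) : rep b (UniversalEnvelopingAlgebra.ι F x) = A b x :=
  UniversalEnvelopingAlgebra.lift_ι_apply F (ALie b) x

theorem ι_swap (x y : g) : UniversalEnvelopingAlgebra.ι F x * UniversalEnvelopingAlgebra.ι F y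
    = UniversalEnvelopingAlgebra.ι F y * UniversalEnvelopingAlgebra.ι F x +
      UniversalEnvelopingAlgebra.ι F ⁅x, y⁆ := by
  rw [LieHom.map_lie, LieRing.of_associative_ring_bracket]; abel

theorem U_induction {P : (UniversalEnvelopingAlgebra F g) → Prop} (hadd : ∀ x y, P x → P y → P (x + y))
    (hmul : ∀ x y, P x → P y → P (x * y)) (hc : ∀ c, P (algebraMap F (UniversalEnvelopingAlgebra F g) c))
    (hι : ∀ x, P (UniversalEnvelopingAlgebra.ι F x)) (u : (UniversalEnvelopingAlgebra F g)) : P u := by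
  let S : Subalgebra F (UniversalEnvelopingAlgebra F g) :=
    { carrier := {u | P u}
      mul_mem' := fun h h' => hmul _ _ h h'
      add_mem' := fun h h' => hadd _ _ h h'
      algebraMap_mem' := hc }
  let f : g →ₗ⁅F⁆ S := { toFun := fun x => ⟨UniversalEnvelopingAlgebra.ι F x, hι x⟩
                         map_add' := fun x y => by ext; simp
                         map_smul' := fun c y => by ext; simp
                         map_lie' := by
                          intro x y
                          ext
                          simp [LieRing.of_associative_ring_bracket] }
  have h : S.val.comp (UniversalEnvelopingAlgebra.lift F f) = AlgHom.id F _ := by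
    ext x
    change ((UniversalEnvelopingAlgebra.lift F f (UniversalEnvelopingAlgebra.ι F x) : S) : (UniversalEnvelopingAlgebra F g)) = _
    rw [UniversalEnvelopingAlgebra.lift_ι_apply]
    rfl
  have h2 := congrArg (fun φ => φ u) h
  simp only [AlgHom.id_apply, AlgHom.comp_apply] at h2
  rw [← h2]
  exact (UniversalEnvelopingAlgebra.lift F f u).2

end

theorem rep_word (l : List I) (hl : l.Pairwise (· ≤ ·)) :
    rep b (word b l) (Finsupp.single 0 1) = Finsupp.single (l : Multiset I) 1 := by
  induction l with
  | nil => simp [word]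
  | cons i l ih =>
    rw [List.pairwise_cons] at hl
    have := ih hl.2
    simp only [word, List.map_cons, List.prod_cons, map_mul, Module.End.mul_apply] at this ⊢
    rw [this, rep_ι, A_le]
    · rfl
    · simpa using hl.1

theorem mon_linearIndependent : LinearIndependent F (mon b) := by
  let f : (UniversalEnvelopingAlgebra F g) →ₗ[F] (Multiset I →₀ F) :=
    (LinearMap.applyₗ (Finsupp.single (0 : Multiset I) (1 : F))).comp (rep b).toLinearMap
  apply LinearIndependent.of_comp f
  have : f ∘ mon b = fun M => Finsupp.single M 1 := by
    funext M
    change rep b (word b _) _ = _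
    rw [rep_word _ _ (Multiset.pairwise_sort _ _), Multiset.sort_eq]
  rw [this]
  exact Finsupp.linearIndependent_single_one F (Multiset I)

/-- Span of words of length less than `n` with letters in `S`. -/
noncomputable def W (S : Set I) (n : ℕ) : Submodule F (UniversalEnvelopingAlgebra F g) :=
  Submodule.span F {u | ∃ l : List I, l.length ≤ n ∧ (∀ i ∈ l, i ∈ S) ∧ u = word b l}

theorem word_append (l l' : List I) : word b (l ++ l') = word b l * word b l' := by
  simp [word]

theorem word_cons (i : I) (l : List I) :
    word b (i :: l) = UniversalEnvelopingAlgebra.ι F (b i) * word b l := by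
  simp [word]

theorem mul_W {S : Set I} {i : I} (hi : i ∈ S) {n : ℕ} {u : (UniversalEnvelopingAlgebra F g)} (hu : u ∈ W b S n) :
    UniversalEnvelopingAlgebra.ι F (b i) * u ∈ W b S (n + 1) := by
  induction hu using Submodule.span_induction with
  | mem u h =>
    obtain ⟨l, hl, hS, rfl⟩ := h
    refine Submodule.subset_span ⟨i :: l, by simpa using hl, ?_, (word_cons b i l).symm⟩
    intro j hj
    rcases List.mem_cons.1 hj with rfl | hj
    · exact hi
    · exact hS j hj
  | zero => simp
  | add x y _ _ hx hy => rw [mul_add]; exact add_mem hx hy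
  | smul c x _ hx => rw [mul_smul_comm]; exact Submodule.smul_mem _ c hx

theorem perm_W (S : Set I) (hS : ∀ i ∈ S, ∀ j ∈ S, ⁅b i, b j⁆ ∈ Submodule.span F (b '' S))
    {l l' : List I} (hl : l.Perm l') : (∀ i ∈ l, i ∈ S) → 
    word b l - word b l' ∈ W b S (l.length - 1) := by
  induction hl with
  | nil => intro _; simp
  | @cons x l l' h ih =>
    intro hm
    have hm' : ∀ i ∈ l, i ∈ S := fun i hi => hm i (List.mem_cons_of_mem _ hi)
    rw [word_cons, word_cons, ← mul_sub]
    cases l with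
    | nil => 
      have := h.nil_eq
      subst this
      simp
    | cons y l => exact mul_W b (hm x (by simp)) (ih hm')
  | swap x y l =>
    intro hm
    simp only [word_cons, ← mul_assoc]
    rw [ι_swap (b y) (b x), add_mul, add_sub_cancel_left]
    have := hS y (hm y (by simp)) x (hm x (by simp))
    generalize ⁅b y, b x⁆ = w at this ⊢
    induction this using Submodule.span_induction with
    | mem z h =>
      obtain ⟨j, hj, rfl⟩ := h
      refine Submodule.subset_span ⟨j :: l, by simp, ?_, (word_cons b j l).symm⟩
      intro i hi
      rcases List.mem_cons.1 hi with rfl | hi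
      · exact hj
      · exact hm i (by simp [hi])
    | zero => simp
    | add x y _ _ hx hy => rw [map_add, add_mul]; exact add_mem hx hy
    | smul c x _ hx => rw [map_smul, smul_mul_assoc]; exact Submodule.smul_mem _ c hx
  | trans h1 h2 ih1 ih2 =>
    intro hm
    have := add_mem (ih1 hm) (h1.length_eq ▸ ih2 (fun i hi => hm i (h1.mem_iff.2 hi)))
    simpa using this

theorem word_mem_span (S : Set I)
    (hS : ∀ i ∈ S, ∀ j ∈ S, ⁅b i, b j⁆ ∈ Submodule.span F (b '' S)) (n : ℕ) :
    W b S n ≤ Submodule.span F (mon b '' {M | ∀ i ∈ M, i ∈ S}) := by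
  induction n with
  | zero =>
    refine Submodule.span_le.2 ?_
    rintro _ ⟨l, hl, hm, rfl⟩
    have : l = [] := by simpa using hl
    subst this
    refine Submodule.subset_span ⟨0, by simp, by simp [mon]⟩
  | succ n ih =>
    refine Submodule.span_le.2 ?_
    rintro _ ⟨l, hl, hm, rfl⟩
    have hp : l.Perm ((l : Multiset I).sort (· ≤ ·)) := by
      rw [← Multiset.coe_eq_coe, Multiset.sort_eq]
    have h1 := perm_W b S hS hp hm
    have h2 : W b S (l.length - 1) ≤ W b S n :=
      Submodule.span_mono fun _ ⟨l', h, h'⟩ => ⟨l', by omega, h'⟩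
    have h3 := add_mem (ih (h2 h1)) (Submodule.subset_span (s := mon b '' {M | ∀ i ∈ M, i ∈ S})
      ⟨(l : Multiset I), by simpa using hm, rfl⟩)
    rw [mon, sub_add_cancel] at h3
    exact h3

theorem adjoin_eq_span (S : Set I)
    (hS : ∀ i ∈ S, ∀ j ∈ S, ⁅b i, b j⁆ ∈ Submodule.span F (b '' S)) :
    Subalgebra.toSubmodule (Algebra.adjoin F
      (UniversalEnvelopingAlgebra.ι F '' (Submodule.span F (b '' S) : Set g))) =
    Submodule.span F (mon b '' {M | ∀ i ∈ M, i ∈ S}) := by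
  have hT : ∀ i ∈ S, UniversalEnvelopingAlgebra.ι F (b i) ∈ Algebra.adjoin F
      (UniversalEnvelopingAlgebra.ι F '' (Submodule.span F (b '' S) : Set g)) := fun i hi =>
    Algebra.subset_adjoin ⟨b i, Submodule.subset_span ⟨i, hi, rfl⟩, rfl⟩
  apply le_antisymm
  · have hle : Algebra.adjoin F
      (UniversalEnvelopingAlgebra.ι F '' (Submodule.span F (b '' S) : Set g)) ≤
      Algebra.adjoin F (UniversalEnvelopingAlgebra.ι F '' (b '' S)) := by
      refine Algebra.adjoin_le ?_
      rintro _ ⟨x, hx, rfl⟩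
      induction hx using Submodule.span_induction with
      | mem z h => exact Algebra.subset_adjoin ⟨z, h, rfl⟩
      | zero => rw [map_zero]; exact zero_mem _
      | add x y _ _ hx hy => rw [map_add]; exact add_mem hx hy
      | smul c x _ hx => rw [map_smul]; exact Subalgebra.smul_mem _ hx c
    refine le_trans (Subalgebra.toSubmodule.monotone hle) ?_
    rw [Algebra.adjoin_eq_span]
    refine Submodule.span_le.2 ?_
    intro u hu
    have : ∃ l : List I, (∀ i ∈ l, i ∈ S) ∧ u = word b l := by
      induction hu using Submonoid.closure_induction with
      | mem x h =>
        obtain ⟨_, ⟨i, hi, rfl⟩, rfl⟩ := h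
        exact ⟨[i], by simpa using hi, by simp [word]⟩
      | one => exact ⟨[], by simp, by simp [word]⟩
      | mul x y _ _ hx hy =>
        obtain ⟨l, hl, rfl⟩ := hx
        obtain ⟨l', hl', rfl⟩ := hy
        refine ⟨l ++ l', ?_, (word_append b l l').symm⟩
        intro i hi
        rcases List.mem_append.1 hi with hi | hi
        · exact hl i hi
        · exact hl' i hi
    obtain ⟨l, hl, rfl⟩ := this
    exact word_mem_span b S hS l.length (Submodule.subset_span ⟨l, le_rfl, hl, rfl⟩)
  · refine Submodule.span_le.2 ?_
    rintro _ ⟨M, hM, rfl⟩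
    refine Subalgebra.list_prod_mem _ ?_
    intro x hx
    obtain ⟨i, hi, rfl⟩ := List.mem_map.1 hx
    exact hT i (hM i (by simpa using hi))

theorem mon_span_top : Submodule.span F (Set.range (mon b)) = ⊤ := by
  have h := adjoin_eq_span b Set.univ (fun i _ j _ => by
    rw [Set.image_univ, b.span_eq]; trivial)
  have h2 : {M : Multiset I | ∀ i ∈ M, i ∈ Set.univ} = Set.univ := by ext; simp
  rw [h2, Set.image_univ, Set.image_univ] at h
  rw [← h, eq_top_iff]
  intro u _
  induction u using U_induction with
  | hadd x y hx hy => exact add_mem (hx trivial) (hy trivial)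
  | hmul x y hx hy => exact Subalgebra.mul_mem _ (hx trivial) (hy trivial)
  | hc c => exact Subalgebra.algebraMap_mem _ c
  | hι x =>
    refine Algebra.subset_adjoin ⟨x, ?_, rfl⟩
    rw [b.span_eq]; trivial

/-- The coproduct of an ordered word is a combination of tensors of ordered words. -/
theorem comul_word (Δ : (UniversalEnvelopingAlgebra F g) →ₐ[F] (UniversalEnvelopingAlgebra F g) ⊗[F] (UniversalEnvelopingAlgebra F g)) (hΔ : ∀ x : g, Δ (UniversalEnvelopingAlgebra.ι F x) =
      (UniversalEnvelopingAlgebra.ι F x) ⊗ₜ 1 + 1 ⊗ₜ (UniversalEnvelopingAlgebra.ι F x))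
    (l : List I) : Δ (word b l) ∈ Submodule.span F
      {u | ∃ l1 l2 : List I, l1.Sublist l ∧ l2.Sublist l ∧ u = word b l1 ⊗ₜ[F] word b l2} := by
  induction l with
  | nil =>
    refine Submodule.subset_span ⟨[], [], by simp, by simp, ?_⟩
    simp [word, Algebra.TensorProduct.one_def]
  | cons i l ih =>
    rw [word_cons, map_mul, hΔ]
    generalize Δ (word b l) = w at ih ⊢
    induction ih using Submodule.span_induction with
    | mem u h =>
      obtain ⟨l1, l2, h1, h2, rfl⟩ := h
      rw [add_mul, Algebra.TensorProduct.tmul_mul_tmul, Algebra.TensorProduct.tmul_mul_tmul,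
        one_mul, one_mul, ← word_cons, ← word_cons]
      refine add_mem (Submodule.subset_span ⟨i :: l1, l2, h1.cons_cons i, h2.cons i, rfl⟩)
        (Submodule.subset_span ⟨l1, i :: l2, h1.cons i, h2.cons_cons i, rfl⟩)
    | zero => simp
    | add x y _ _ hx hy => rw [mul_add]; exact add_mem hx hy
    | smul c x _ hx => rw [mul_smul_comm]; exact Submodule.smul_mem _ c hx

end PBW
namespace CDCP

section transfer
variable {F C D : Type*} [Field F] [AddCommGroup C] [Module F C] [AddCommGroup D] [Module F D]
  (dC : C →ₗ[F] C ⊗[F] C) (dD : D →ₗ[F] D ⊗[F] D) (f : C →ₗ[F] D)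

theorem coassoc_left
    (hf : dD ∘ₗ f = TensorProduct.map f f ∘ₗ dC) :
    (TensorProduct.assoc F D D D).toLinearMap ∘ₗ dD.rTensor D ∘ₗ dD ∘ₗ f =
      TensorProduct.map f (TensorProduct.map f f) ∘ₗ
        (TensorProduct.assoc F C C C).toLinearMap ∘ₗ dC.rTensor C ∘ₗ dC := by
  have h1 : dD.rTensor D ∘ₗ TensorProduct.map f f =
      TensorProduct.map (TensorProduct.map f f) f ∘ₗ dC.rTensor C := by
    rw [LinearMap.rTensor, LinearMap.rTensor, ← TensorProduct.map_comp, ← TensorProduct.map_comp,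
      hf]; rfl
  have h2 : (TensorProduct.assoc F D D D).toLinearMap ∘ₗ
      TensorProduct.map (TensorProduct.map f f) f =
      TensorProduct.map f (TensorProduct.map f f) ∘ₗ (TensorProduct.assoc F C C C).toLinearMap := by
    ext a b c; simp
  rw [hf]
  ext c
  have h1' := LinearMap.congr_fun h1 (dC c)
  have h2' := LinearMap.congr_fun h2 (dC.rTensor C (dC c))
  simp only [LinearMap.comp_apply] at h1' h2' ⊢
  rw [h1', h2']

theorem coassoc_right
    (hf : dD ∘ₗ f = TensorProduct.map f f ∘ₗ dC) :
    dD.lTensor D ∘ₗ dD ∘ₗ f =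
      TensorProduct.map f (TensorProduct.map f f) ∘ₗ dC.lTensor C ∘ₗ dC := by
  have h1 : dD.lTensor D ∘ₗ TensorProduct.map f f =
      TensorProduct.map f (TensorProduct.map f f) ∘ₗ dC.lTensor C := by
    rw [LinearMap.lTensor, LinearMap.lTensor, ← TensorProduct.map_comp, ← TensorProduct.map_comp,
      hf]; rfl
  rw [hf, ← LinearMap.comp_assoc, h1, LinearMap.comp_assoc]

theorem counit_left
    (hf : dD ∘ₗ f = TensorProduct.map f f ∘ₗ dC)
    (eC : C →ₗ[F] F) (eD : D →ₗ[F] F) (he : eD ∘ₗ f = eC) : eD.rTensor D ∘ₗ dD ∘ₗ f = f.lTensor F ∘ₗ eC.rTensor C ∘ₗ dC := by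
  rw [hf, ← LinearMap.comp_assoc, ← LinearMap.comp_assoc]
  congr 1
  rw [← he]
  ext a b; simp

theorem counit_right
    (hf : dD ∘ₗ f = TensorProduct.map f f ∘ₗ dC)
    (eC : C →ₗ[F] F) (eD : D →ₗ[F] F) (he : eD ∘ₗ f = eC) : eD.lTensor D ∘ₗ dD ∘ₗ f = f.rTensor F ∘ₗ eC.lTensor C ∘ₗ dC := by
  rw [hf, ← LinearMap.comp_assoc, ← LinearMap.comp_assoc]
  congr 1
  rw [← he]
  ext a b; simp

/-- Transfer of a coalgebra structure to a quotient. -/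
noncomputable abbrev coalgOfSurj
    (hf : dD ∘ₗ f = TensorProduct.map f f ∘ₗ dC)
    (eC : C →ₗ[F] F) (eD : D →ₗ[F] F) (he : eD ∘ₗ f = eC) (hsurj : Function.Surjective f)
    (h1 : (TensorProduct.assoc F C C C).toLinearMap ∘ₗ dC.rTensor C ∘ₗ dC = dC.lTensor C ∘ₗ dC)
    (h2 : eC.rTensor C ∘ₗ dC = TensorProduct.mk F F C 1)
    (h3 : eC.lTensor C ∘ₗ dC = (TensorProduct.mk F C F).flip 1) : Coalgebra F D where
  comul := dD
  counit := eD
  coassoc := by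
    have a := coassoc_left dC dD f hf
    have b := coassoc_right dC dD f hf
    rw [h1, ← b] at a
    exact (LinearMap.cancel_right hsurj).1 a
  rTensor_counit_comp_comul := by
    have a := counit_left dC dD f hf eC eD he
    rw [h2] at a
    refine (LinearMap.cancel_right hsurj).1 (a.trans ?_)
    ext x; simp
  lTensor_counit_comp_comul := by
    have a := counit_right dC dD f hf eC eD he
    rw [h3] at a
    refine (LinearMap.cancel_right hsurj).1 (a.trans ?_)
    ext x; simp

/-- Transfer of a coalgebra structure to a subspace. -/
noncomputable abbrev coalgOfInj
    (hf : dD ∘ₗ f = TensorProduct.map f f ∘ₗ dC)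
    (eC : C →ₗ[F] F) (eD : D →ₗ[F] F) (he : eD ∘ₗ f = eC) (hinj : Function.Injective f)
    (h1 : (TensorProduct.assoc F D D D).toLinearMap ∘ₗ dD.rTensor D ∘ₗ dD = dD.lTensor D ∘ₗ dD)
    (h2 : eD.rTensor D ∘ₗ dD = TensorProduct.mk F F D 1)
    (h3 : eD.lTensor D ∘ₗ dD = (TensorProduct.mk F D F).flip 1) : Coalgebra F C where
  comul := dC
  counit := eC
  coassoc := by
    have a := coassoc_left dC dD f hf
    have b := coassoc_right dC dD f hf
    have hinj2 : Function.Injective (TensorProduct.map f (TensorProduct.map f f)) :=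
      TensorProduct.map_injective_of_flat_flat _ _ hinj
        (TensorProduct.map_injective_of_flat_flat _ _ hinj hinj)
    refine (LinearMap.cancel_left hinj2).1 ?_
    rw [← a, ← b]
    ext c
    exact LinearMap.congr_fun h1 (f c)
  rTensor_counit_comp_comul := by
    have a := counit_left dC dD f hf eC eD he
    have hinj2 : Function.Injective (f.lTensor F) := Module.Flat.lTensor_preserves_injective_linearMap f hinj
    refine (LinearMap.cancel_left hinj2).1 (a.symm.trans ?_)
    rw [← LinearMap.comp_assoc, h2]
    ext x; simp
  lTensor_counit_comp_comul := by
    have a := counit_right dC dD f hf eC eD he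
    have hinj2 : Function.Injective (f.rTensor F) := Module.Flat.rTensor_preserves_injective_linearMap f hinj
    refine (LinearMap.cancel_left hinj2).1 (a.symm.trans ?_)
    rw [← LinearMap.comp_assoc, h3]
    ext x; simp

end transfer

section main
variable {F U Q H : Type*} [Field F] [Ring U] [Algebra F U] [AddCommGroup Q] [Module F Q]
  [Ring H] [Algebra F H] [Coalgebra F Q] [Coalgebra F H]
  (ΔU : U →ₐ[F] U ⊗[F] U) (p : U →ₗ[F] Q) (j : H →ₐ[F] U) (s : Q →ₗ[F] U)
  (Ψ : Q ⊗[F] H ≃ₗ[F] U)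

/-- products of coalgebra maps into a bialgebra are coalgebra maps -/
theorem comul_mul {C D : Type*} [AddCommGroup C] [Module F C] [AddCommGroup D] [Module F D]
    [Coalgebra F C] [Coalgebra F D] (f : C →ₗ[F] U) (f' : D →ₗ[F] U)
    (hf : TensorProduct.map f f ∘ₗ Coalgebra.comul = ΔU.toLinearMap ∘ₗ f)
    (hf' : TensorProduct.map f' f' ∘ₗ Coalgebra.comul = ΔU.toLinearMap ∘ₗ f') :
    ΔU.toLinearMap ∘ₗ (LinearMap.mul' F U ∘ₗ TensorProduct.map f f') =
    TensorProduct.map (LinearMap.mul' F U ∘ₗ TensorProduct.map f f')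
      (LinearMap.mul' F U ∘ₗ TensorProduct.map f f') ∘ₗ
      (TensorProduct.tensorTensorTensorComm F C C D D).toLinearMap ∘ₗ
      TensorProduct.map Coalgebra.comul Coalgebra.comul := by
  ext c d
  have h1 := LinearMap.congr_fun hf c
  have h2 := LinearMap.congr_fun hf' d
  simp only [LinearMap.comp_apply, AlgHom.toLinearMap_apply] at h1 h2
  simp only [TensorProduct.AlgebraTensorModule.curry_apply, LinearMap.restrictScalars_self,
    TensorProduct.curry_apply, LinearMap.comp_apply, TensorProduct.map_tmul,
    LinearMap.mul'_apply, AlgHom.toLinearMap_apply, map_mul, ← h1, ← h2, LinearEquiv.coe_coe]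
  generalize Coalgebra.comul (R := F) c = X
  generalize Coalgebra.comul (R := F) d = Y
  induction X with
  | zero => simp
  | add X X' hX hX' => simp only [map_add, add_mul, TensorProduct.add_tmul, hX, hX']
  | tmul a a' =>
    induction Y with
    | zero => simp
    | add X X' hX hX' => simp only [map_add, mul_add, TensorProduct.tmul_add, hX, hX']
    | tmul b b' => simp

theorem pair_id : TensorProduct.map
      ((TensorProduct.rid F Q).toLinearMap ∘ₗ (Coalgebra.counit (R := F) (A := H)).lTensor Q)
      ((TensorProduct.lid F H).toLinearMap ∘ₗ (Coalgebra.counit (R := F) (A := Q)).rTensor H) ∘ₗ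
      (TensorProduct.tensorTensorTensorComm F Q Q H H).toLinearMap ∘ₗ
      TensorProduct.map Coalgebra.comul Coalgebra.comul = LinearMap.id := by
  ext t v
  have h1 := congrArg (TensorProduct.rid F Q) (Coalgebra.lTensor_counit_comul (R := F) t)
  have h2 := congrArg (TensorProduct.lid F H) (Coalgebra.rTensor_counit_comul (R := F) v)
  simp only [TensorProduct.rid_tmul, TensorProduct.lid_tmul, one_smul] at h1 h2
  simp only [TensorProduct.AlgebraTensorModule.curry_apply, LinearMap.restrictScalars_self,
    TensorProduct.curry_apply, LinearMap.comp_apply, TensorProduct.map_tmul,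
    LinearEquiv.coe_coe, LinearMap.id_apply]
  conv_rhs => rw [← h1, ← h2]
  generalize Coalgebra.comul (R := F) t = X
  generalize Coalgebra.comul (R := F) v = Y
  induction X with
  | zero => simp
  | add X X' hX hX' => simp only [map_add, TensorProduct.add_tmul, hX, hX']
  | tmul a a' =>
    induction Y with
    | zero => simp
    | add X X' hX hX' => simp only [map_add, TensorProduct.tmul_add, hX, hX']
    | tmul b b' => simp [TensorProduct.smul_tmul', TensorProduct.tmul_smul]; rw [smul_comm]

theorem cdcp_exists
    (hj : TensorProduct.map j.toLinearMap j.toLinearMap ∘ₗ Coalgebra.comul =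
      ΔU.toLinearMap ∘ₗ j.toLinearMap)
    (hs : TensorProduct.map s s ∘ₗ Coalgebra.comul = ΔU.toLinearMap ∘ₗ s)
    (hp : Coalgebra.comul ∘ₗ p = TensorProduct.map p p ∘ₗ ΔU.toLinearMap)
    (hΨ : ∀ t v, Ψ (t ⊗ₜ v) = s t * j v)
    (hpΨ : ∀ t v, p (s t * j v) = Coalgebra.counit (R := F) v • t) :
    ∃ (act : H ⊗[F] Q →ₗ[F] Q) (ps : H ⊗[F] Q →ₗ[F] H) (mM : Q ⊗[F] Q →ₗ[F] Q)
      (th : Q ⊗[F] Q →ₗ[F] H),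
      Ψ.toLinearMap ∘ₗ
        cdcpMul F Q H Coalgebra.comul Coalgebra.comul act ps mM th (LinearMap.mul' F H) =
      LinearMap.mul' F U ∘ₗ TensorProduct.map Ψ.toLinearMap Ψ.toLinearMap := by
  have hΨ' : Ψ.toLinearMap = LinearMap.mul' F U ∘ₗ TensorProduct.map s j.toLinearMap := by
    ext t v; simp [hΨ]
  let q : U →ₗ[F] H := (TensorProduct.lid F H).toLinearMap ∘ₗ
    (Coalgebra.counit (R := F) (A := Q)).rTensor H ∘ₗ Ψ.symm.toLinearMap
  have hpq : ∀ a : U, Ψ (TensorProduct.map p q (ΔU a)) = a := by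
    intro a
    obtain ⟨z, rfl⟩ := Ψ.surjective a
    have h1 := LinearMap.congr_fun (comul_mul ΔU s j.toLinearMap hs hj) z
    rw [← hΨ'] at h1
    simp only [LinearMap.comp_apply, AlgHom.toLinearMap_apply, LinearEquiv.coe_coe] at h1
    rw [h1]
    congr 1
    have h2 := LinearMap.congr_fun (pair_id (F := F) (Q := Q) (H := H)) z
    conv_rhs => rw [← LinearMap.id_apply (R := F) z, ← h2]
    simp only [LinearMap.comp_apply, LinearEquiv.coe_coe]
    rw [← LinearMap.comp_apply, ← TensorProduct.map_comp]
    congr 2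
    · ext t v; simp [hΨ, hpΨ]
    · ext t v; simp [q]
  let μ1 : H ⊗[F] Q →ₗ[F] U := LinearMap.mul' F U ∘ₗ TensorProduct.map j.toLinearMap s
  let μ2 : Q ⊗[F] Q →ₗ[F] U := LinearMap.mul' F U ∘ₗ TensorProduct.map s s
  have hμ1 : ΔU.toLinearMap ∘ₗ μ1 = TensorProduct.map μ1 μ1 ∘ₗ Coalgebra.comul :=
    comul_mul ΔU j.toLinearMap s hj hs
  have hμ2 : ΔU.toLinearMap ∘ₗ μ2 = TensorProduct.map μ2 μ2 ∘ₗ Coalgebra.comul :=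
    comul_mul ΔU s s hs hs
  let act := p ∘ₗ μ1
  let ps := q ∘ₗ μ1
  let mM := p ∘ₗ μ2
  let th := q ∘ₗ μ2
  have e1 : ∀ z, Ψ (TensorProduct.map act ps (Coalgebra.comul (R := F) z)) = μ1 z := by
    intro z
    rw [← hpq (μ1 z)]
    have := LinearMap.congr_fun hμ1 z
    simp only [LinearMap.comp_apply, AlgHom.toLinearMap_apply] at this
    rw [this, TensorProduct.map_comp]; rfl
  have e2 : ∀ z, Ψ (TensorProduct.map mM th (Coalgebra.comul (R := F) z)) = μ2 z := by
    intro z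
    rw [← hpq (μ2 z)]
    have := LinearMap.congr_fun hμ2 z
    simp only [LinearMap.comp_apply, AlgHom.toLinearMap_apply] at this
    rw [this, TensorProduct.map_comp]; rfl
  have hact : Coalgebra.comul ∘ₗ act = TensorProduct.map act act ∘ₗ Coalgebra.comul := by
    rw [← LinearMap.comp_assoc, hp, LinearMap.comp_assoc, hμ1, ← LinearMap.comp_assoc,
      ← TensorProduct.map_comp]
  refine ⟨act, ps, mM, th, ?_⟩
  -- coassociativity
  have hΘ : ∀ z : H ⊗[F] Q, sweedlerPair F Coalgebra.comul Coalgebra.comul act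
      (sweedlerPair F Coalgebra.comul Coalgebra.comul act ps) z =
      TensorProduct.assoc F Q Q H ((Coalgebra.comul (R := F) (A := Q)).rTensor H
        (TensorProduct.map act ps (Coalgebra.comul (R := F) z))) := by
    intro z
    change TensorProduct.map act (TensorProduct.map act ps ∘ₗ Coalgebra.comul)
      (Coalgebra.comul (R := F) z) = _
    have hl : TensorProduct.map act (TensorProduct.map act ps ∘ₗ Coalgebra.comul) =
      TensorProduct.map act (TensorProduct.map act ps) ∘ₗ
        (Coalgebra.comul (R := F) (A := H ⊗[F] Q)).lTensor _ := by
      rw [LinearMap.lTensor, ← TensorProduct.map_comp, LinearMap.comp_id]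
    rw [hl, LinearMap.comp_apply, ← Coalgebra.coassoc_apply]
    have hr : (Coalgebra.comul (R := F) (A := Q)).rTensor H ∘ₗ TensorProduct.map act ps =
      TensorProduct.map (TensorProduct.map act act) ps ∘ₗ
        (Coalgebra.comul (R := F) (A := H ⊗[F] Q)).rTensor _ := by
      rw [LinearMap.rTensor, LinearMap.rTensor, ← TensorProduct.map_comp, ← TensorProduct.map_comp,
        hact, LinearMap.id_comp, LinearMap.comp_id]
    have hr' := LinearMap.congr_fun hr (Coalgebra.comul (R := F) z)
    simp only [LinearMap.comp_apply] at hr'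
    rw [hr']
    generalize (Coalgebra.comul (R := F) (A := H ⊗[F] Q)).rTensor _ (Coalgebra.comul (R := F) z) = Z
    have h3 : TensorProduct.map act (TensorProduct.map act ps) ∘ₗ
      (TensorProduct.assoc F (H ⊗[F] Q) (H ⊗[F] Q) (H ⊗[F] Q)).toLinearMap =
      (TensorProduct.assoc F Q Q H).toLinearMap ∘ₗ
        TensorProduct.map (TensorProduct.map act act) ps := by
      apply TensorProduct.ext_threefold
      intro a b c
      simp
    exact LinearMap.congr_fun h3 Z
  apply TensorProduct.ext'
  intro xh xh'
  induction xh with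
  | zero => simp
  | add a b ha hb => rw [TensorProduct.add_tmul, map_add, map_add, ha, hb]
  | tmul x h =>
  induction xh' with
  | zero => simp
  | add a b ha hb => rw [TensorProduct.tmul_add, map_add, map_add, ha, hb]
  | tmul x' h' =>
  have rhs : (LinearMap.mul' F U ∘ₗ TensorProduct.map Ψ.toLinearMap Ψ.toLinearMap)
      ((x ⊗ₜ h) ⊗ₜ (x' ⊗ₜ h')) =
      s x * Ψ (TensorProduct.map act ps (Coalgebra.comul (R := F) (h ⊗ₜ[F] x'))) * j h' := by
    rw [e1]
    simp [μ1, hΨ, mul_assoc]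
  rw [rhs]
  simp only [cdcpMul, LinearMap.comp_apply, LinearEquiv.coe_coe, LinearMap.rTensor_tmul,
    LinearMap.lTensor_tmul, TensorProduct.assoc_tmul, TensorProduct.assoc_symm_tmul]
  rw [hΘ]
  generalize TensorProduct.map act ps (Coalgebra.comul (R := F) (h ⊗ₜ[F] x')) = z
  induction z with
  | zero => simp
  | add a b ha hb =>
    simp only [map_add, TensorProduct.tmul_add, TensorProduct.add_tmul, mul_add, add_mul, ha, hb]
  | tmul y w =>
  have r2 : s x * Ψ (y ⊗ₜ w) * j h' =
      Ψ (TensorProduct.map mM th (Coalgebra.comul (R := F) (x ⊗ₜ[F] y))) * j (w * h') := by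
    rw [e2]; simp [μ2, hΨ, mul_assoc]
  rw [r2, TensorProduct.comul_tmul, LinearMap.rTensor_tmul]
  generalize Coalgebra.comul (R := F) x = X
  generalize Coalgebra.comul (R := F) y = Y
  induction X with
  | zero => simp
  | add a b ha hb =>
    simp only [map_add, TensorProduct.add_tmul, add_mul, ha, hb]
  | tmul a a' =>
    induction Y with
    | zero => simp
    | add a b ha hb =>
      simp only [map_add, TensorProduct.tmul_add, TensorProduct.add_tmul, add_mul, ha, hb]
    | tmul b b' => simp [hΨ, mul_assoc]

end main
end CDCP

namespace PBW
variable {F : Type*} [Field F] {g : Type*} [LieRing g] [LieAlgebra F g]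
  {I : Type*} [LinearOrder I] (b : Module.Basis I F g)

theorem mon_coe (l : List I) (hl : l.Pairwise (· ≤ ·)) : mon b (l : Multiset I) = word b l := by
  rw [mon, Multiset.coe_sort, List.mergeSort_eq_self _ hl]

theorem mon_add (M N : Multiset I) (h : ∀ i ∈ M, ∀ j ∈ N, i ≤ j) :
    mon b (M + N) = mon b M * mon b N := by
  have : M + N = ((M.sort (· ≤ ·) ++ N.sort (· ≤ ·) : List I) : Multiset I) := by
    rw [← Multiset.coe_add, Multiset.sort_eq, Multiset.sort_eq]
  rw [this, mon_coe, word_append]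
  · rfl
  · rw [List.pairwise_append]
    refine ⟨Multiset.pairwise_sort _ _, Multiset.pairwise_sort _ _, ?_⟩
    intro i hi j hj
    exact h i (by simpa using hi) j (by simpa using hj)

/-- The PBW basis. -/
noncomputable def monBasis : Module.Basis (Multiset I) F (UniversalEnvelopingAlgebra F g) :=
  Module.Basis.mk (mon_linearIndependent b) (mon_span_top b).ge

open Classical in
/-- Splitting a multiset into the parts outside and inside of `S`. -/
noncomputable def splitEquiv (S : Set I) :
    {M : Multiset I // ∀ i ∈ M, i ∉ S} × {M : Multiset I // ∀ i ∈ M, i ∈ S} ≃ Multiset I where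
  toFun p := p.1.1 + p.2.1
  invFun M := (⟨M.filter (· ∉ S), fun i hi => (Multiset.mem_filter.1 hi).2⟩,
    ⟨M.filter (· ∈ S), fun i hi => (Multiset.mem_filter.1 hi).2⟩)
  left_inv := by
    rintro ⟨⟨M, hM⟩, ⟨N, hN⟩⟩
    ext1
    · ext1
      simp only [Multiset.filter_add]
      rw [Multiset.filter_eq_self.2 hM, Multiset.filter_eq_nil.2 (fun i hi => not_not.2 (hN i hi)),
        add_zero]
    · ext1
      simp only [Multiset.filter_add]
      rw [Multiset.filter_eq_self.2 hN, Multiset.filter_eq_nil.2 hM, zero_add]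
  right_inv M := by
    dsimp only
    rw [add_comm, Multiset.filter_add_not]

theorem exists_Phi (S : Set I)
    (hS : ∀ i ∈ S, ∀ j ∈ S, ⁅b i, b j⁆ ∈ Submodule.span F (b '' S))
    (hlt : ∀ i ∉ S, ∀ j ∈ S, i ≤ j)
    (Uh : Subalgebra F (UniversalEnvelopingAlgebra F g))
    (hUh : Uh = Algebra.adjoin F
      (UniversalEnvelopingAlgebra.ι F '' (Submodule.span F (b '' S) : Set g))) :
    ∃ Φ : (({M : Multiset I // ∀ i ∈ M, i ∉ S} →₀ F) ⊗[F] Uh) ≃ₗ[F]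
        UniversalEnvelopingAlgebra F g,
      ∀ A (v : Uh), Φ (Finsupp.single A 1 ⊗ₜ v) = mon b A.1 * v := by
  have hsp := adjoin_eq_span b S hS
  rw [← hUh] at hsp
  have hmem : ∀ B : {M : Multiset I // ∀ i ∈ M, i ∈ S}, mon b B.1 ∈ Uh := by
    intro B
    rw [← Subalgebra.mem_toSubmodule, hsp]
    exact Submodule.subset_span ⟨B.1, B.2, rfl⟩
  let y : {M : Multiset I // ∀ i ∈ M, i ∈ S} → Uh := fun B => ⟨mon b B.1, hmem B⟩
  have hli : LinearIndependent F y := by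
    apply LinearIndependent.of_comp Uh.val.toLinearMap
    exact (mon_linearIndependent b).comp _ Subtype.val_injective
  have hspan : ⊤ ≤ Submodule.span F (Set.range y) := by
    rintro ⟨v, hv⟩ -
    rw [← Subalgebra.mem_toSubmodule, hsp] at hv
    have : Submodule.map Uh.val.toLinearMap (Submodule.span F (Set.range y)) =
        Submodule.span F (mon b '' {M | ∀ i ∈ M, i ∈ S}) := by
      rw [Submodule.map_span]
      congr 1
      ext u
      simp only [y, Set.mem_image, Set.mem_range, Set.mem_ofPred_eq]
      constructor
      · rintro ⟨_, ⟨B, rfl⟩, rfl⟩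
        exact ⟨B.1, B.2, rfl⟩
      · rintro ⟨B, hB, rfl⟩
        exact ⟨_, ⟨⟨B, hB⟩, rfl⟩, rfl⟩
    rw [← this] at hv
    obtain ⟨w, hw, hwv⟩ := hv
    have : w = ⟨v, by rw [← hwv]; exact w.2⟩ := Subtype.ext hwv
    rw [this] at hw
    exact hw
  let bY := Module.Basis.mk hli hspan
  let bX : Module.Basis {M : Multiset I // ∀ i ∈ M, i ∉ S} F
    ({M : Multiset I // ∀ i ∈ M, i ∉ S} →₀ F) := Finsupp.basisSingleOne
  refine ⟨(bX.tensorProduct bY).equiv (monBasis b) (splitEquiv S), ?_⟩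
  intro A v
  have : ((bX.tensorProduct bY).equiv (monBasis b) (splitEquiv S)).toLinearMap ∘ₗ
      TensorProduct.mk F _ _ (Finsupp.single A 1) =
      LinearMap.mulLeft F (mon b A.1) ∘ₗ Uh.val.toLinearMap := by
    apply bY.ext
    intro B
    have h1 : (Finsupp.single A 1 : _ →₀ F) ⊗ₜ[F] bY B = (bX.tensorProduct bY) (A, B) := by
      rw [Module.Basis.tensorProduct_apply]; simp [bX]
    simp only [LinearMap.comp_apply, TensorProduct.mk_apply, LinearEquiv.coe_coe]
    rw [h1, Module.Basis.equiv_apply]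
    simp only [monBasis, Module.Basis.mk_apply, splitEquiv, Equiv.coe_fn_mk, bY]
    rw [mon_add]
    · rfl
    · intro i hi j hj
      exact hlt i (A.2 i hi) j (B.2 j hj)
  exact LinearMap.congr_fun this v

theorem exists_section (S : Set I)
    (hS : ∀ i ∈ S, ∀ j ∈ S, ⁅b i, b j⁆ ∈ Submodule.span F (b '' S))
    (hlt : ∀ i ∉ S, ∀ j ∈ S, i ≤ j)
    (Uh : Subalgebra F (UniversalEnvelopingAlgebra F g))
    (hUh : Uh = Algebra.adjoin F
      (UniversalEnvelopingAlgebra.ι F '' (Submodule.span F (b '' S) : Set g)))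
    (εU : UniversalEnvelopingAlgebra F g →ₐ[F] F)
    (ΔU : UniversalEnvelopingAlgebra F g →ₐ[F]
      (UniversalEnvelopingAlgebra F g ⊗[F] UniversalEnvelopingAlgebra F g))
    (hΔU : ∀ x : g, ΔU (UniversalEnvelopingAlgebra.ι F x) =
      (UniversalEnvelopingAlgebra.ι F x) ⊗ₜ 1 + 1 ⊗ₜ (UniversalEnvelopingAlgebra.ι F x))
    (J : Submodule F (UniversalEnvelopingAlgebra F g))
    (hJ : J = Submodule.span F
      {z | ∃ u v : UniversalEnvelopingAlgebra F g, v ∈ Uh ∧ εU v = 0 ∧ z = u * v}) :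
    ∃ (Ψ : ((UniversalEnvelopingAlgebra F g ⧸ J) ⊗[F] Uh) ≃ₗ[F] UniversalEnvelopingAlgebra F g)
      (s : (UniversalEnvelopingAlgebra F g ⧸ J) →ₗ[F] UniversalEnvelopingAlgebra F g),
      (J.mkQ ∘ₗ s = LinearMap.id) ∧
      (∀ t (v : Uh), Ψ (t ⊗ₜ v) = s t * (v : UniversalEnvelopingAlgebra F g)) ∧
      ∀ t, ΔU (s t) ∈ LinearMap.range (TensorProduct.map s s) := by
  obtain ⟨Φ, hΦ⟩ := exists_Phi b S hS hlt Uh hUh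
  let X := {M : Multiset I // ∀ i ∈ M, i ∉ S} →₀ F
  let σ : X →ₗ[F] UniversalEnvelopingAlgebra F g :=
    Φ.toLinearMap ∘ₗ (TensorProduct.mk F X Uh).flip 1
  have hσ : ∀ A, σ (Finsupp.single A 1) = mon b A.1 := by
    intro A; simp [σ, X, hΦ]
  have hΦ2 : ∀ (x : X) (v : Uh), Φ (x ⊗ₜ v) = σ x * v := by
    intro x v
    have : Φ.toLinearMap ∘ₗ (TensorProduct.mk F X Uh).flip v =
        LinearMap.mulRight F (v : UniversalEnvelopingAlgebra F g) ∘ₗ σ := by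
      ext A
      simp [hσ, X, hΦ]
    exact LinearMap.congr_fun this x
  let εh : Uh →ₐ[F] F := εU.comp Uh.val
  let q : UniversalEnvelopingAlgebra F g →ₗ[F] X :=
    (TensorProduct.rid F X).toLinearMap ∘ₗ εh.toLinearMap.lTensor X ∘ₗ Φ.symm.toLinearMap
  have hq : ∀ x (v : Uh), q (σ x * v) = εU v • x := by
    intro x v
    rw [← hΦ2]; simp [q, εh]
  have hqσ : ∀ x, q (σ x) = x := by
    intro x
    have := hq x 1
    simpa using this
  have hker : J = LinearMap.ker q := by
    apply le_antisymm
    · rw [hJ]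
      refine Submodule.span_le.2 ?_
      rintro _ ⟨u, v, hv, hev, rfl⟩
      rw [SetLike.mem_coe, LinearMap.mem_ker]
      obtain ⟨z, rfl⟩ := Φ.surjective u
      induction z with
      | zero => simp
      | add x y hx hy => rw [map_add, add_mul, map_add, hx, hy, add_zero]
      | tmul x w =>
        rw [hΦ2, mul_assoc]
        have := hq x (w * ⟨v, hv⟩)
        simp only [MulMemClass.coe_mul] at this
        rw [this, map_mul, hev, mul_zero, zero_smul]
    · have key : ∀ u, u - σ (q u) ∈ J := by
        intro u
        obtain ⟨z, rfl⟩ := Φ.surjective u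
        induction z with
        | zero => simp
        | add x y hx hy =>
          have := add_mem hx hy
          rw [map_add, map_add, map_add]
          convert this using 1
          abel
        | tmul x w =>
          rw [hΦ2, hq, hJ]
          refine Submodule.subset_span ⟨σ x, w - algebraMap F _ (εU w), ?_, ?_, ?_⟩
          · exact Subalgebra.sub_mem _ w.2 (Subalgebra.algebraMap_mem _ _)
          · simp
          · rw [mul_sub, map_smul, ← Algebra.commutes, ← Algebra.smul_def]
      intro u hu
      have := key u
      rw [LinearMap.mem_ker.1 hu] at this
      simpa using this
  have hqs : Function.Surjective q := fun x => ⟨σ x, hqσ x⟩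
  let e : (UniversalEnvelopingAlgebra F g ⧸ J) ≃ₗ[F] X :=
    (Submodule.quotEquivOfEq _ _ hker).trans (q.quotKerEquivOfSurjective hqs)
  have he : ∀ u, e (J.mkQ u) = q u := fun u => rfl
  refine ⟨(TensorProduct.congr e (LinearEquiv.refl F Uh)).trans Φ, σ ∘ₗ e.toLinearMap, ?_, ?_, ?_⟩
  · apply LinearMap.ext
    intro t
    apply e.injective
    simp only [LinearMap.comp_apply, he, hqσ]
    rfl
  · intro t v
    simp [hΦ2]
  · intro t
    have hσr : ∀ x : X, σ x = (σ ∘ₗ e.toLinearMap) (e.symm x) := by intro x; simp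
    change ΔU (σ (e t)) ∈ _
    generalize e t = x
    have hX : ∀ x : X, (LinearMap.range (TensorProduct.map (σ ∘ₗ e.toLinearMap)
        (σ ∘ₗ e.toLinearMap))).mkQ (ΔU (σ x)) = 0 := by
      intro x
      have : (LinearMap.range (TensorProduct.map (σ ∘ₗ e.toLinearMap)
        (σ ∘ₗ e.toLinearMap))).mkQ ∘ₗ ΔU.toLinearMap ∘ₗ σ = 0 := by
        apply Finsupp.lhom_ext'
        intro A
        apply LinearMap.ext_ring
        simp only [LinearMap.comp_apply, Finsupp.lsingle_apply, AlgHom.toLinearMap_apply,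
          LinearMap.zero_apply]
        rw [hσ, Submodule.mkQ_apply, Submodule.Quotient.mk_eq_zero]
        refine Submodule.span_le.2 ?_ (comul_word b ΔU hΔU _)
        rintro _ ⟨l1, l2, h1, h2, rfl⟩
        have hl : ∀ l : List I, l.Sublist (A.1.sort (· ≤ ·)) → ∃ x : X, word b l = σ x := by
          intro l hl
          refine ⟨Finsupp.single ⟨(l : Multiset I), ?_⟩ 1, ?_⟩
          · intro i hi
            exact A.2 i (by simpa using hl.subset hi)
          · rw [hσ, mon_coe]
            exact (Multiset.pairwise_sort A.1 (· ≤ ·)).sublist hl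
        obtain ⟨x1, e1⟩ := hl l1 h1
        obtain ⟨x2, e2⟩ := hl l2 h2
        rw [e1, e2, hσr x1, hσr x2]
        exact ⟨e.symm x1 ⊗ₜ e.symm x2, rfl⟩
      exact LinearMap.congr_fun this x
    have := hX x
    rwa [Submodule.mkQ_apply, Submodule.Quotient.mk_eq_zero] at this

theorem coassoc_U (ΔU : UniversalEnvelopingAlgebra F g →ₐ[F]
      (UniversalEnvelopingAlgebra F g ⊗[F] UniversalEnvelopingAlgebra F g))
    (hΔU : ∀ x : g, ΔU (UniversalEnvelopingAlgebra.ι F x) =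
      (UniversalEnvelopingAlgebra.ι F x) ⊗ₜ 1 + 1 ⊗ₜ (UniversalEnvelopingAlgebra.ι F x)) :
    (TensorProduct.assoc F _ _ _).toLinearMap ∘ₗ ΔU.toLinearMap.rTensor _ ∘ₗ ΔU.toLinearMap =
      ΔU.toLinearMap.lTensor _ ∘ₗ ΔU.toLinearMap := by
  have : (Algebra.TensorProduct.assoc F F F _ _ _).toAlgHom.comp
      ((Algebra.TensorProduct.map ΔU (AlgHom.id F _)).comp ΔU) =
      (Algebra.TensorProduct.map (AlgHom.id F _) ΔU).comp ΔU := by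
    apply AlgHom.ext
    intro u
    induction u using U_induction with
    | hadd x y hx hy => rw [map_add, hx, hy, map_add]
    | hmul x y hx hy => rw [map_mul, hx, hy, map_mul]
    | hc c => simp only [AlgHom.commutes]
    | hι x =>
      have e1 := hΔU x
      generalize UniversalEnvelopingAlgebra.ι F x = w at e1 ⊢
      simp [e1, TensorProduct.add_tmul, TensorProduct.tmul_add, Algebra.TensorProduct.one_def]
      abel
  exact congrArg AlgHom.toLinearMap this

theorem counit_U_left (εU : UniversalEnvelopingAlgebra F g →ₐ[F] F)
    (hεU : ∀ x : g, εU (UniversalEnvelopingAlgebra.ι F x) = 0)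
    (ΔU : UniversalEnvelopingAlgebra F g →ₐ[F]
      (UniversalEnvelopingAlgebra F g ⊗[F] UniversalEnvelopingAlgebra F g))
    (hΔU : ∀ x : g, ΔU (UniversalEnvelopingAlgebra.ι F x) =
      (UniversalEnvelopingAlgebra.ι F x) ⊗ₜ 1 + 1 ⊗ₜ (UniversalEnvelopingAlgebra.ι F x)) :
    εU.toLinearMap.rTensor _ ∘ₗ ΔU.toLinearMap = TensorProduct.mk F F _ 1 := by
  have : (Algebra.TensorProduct.map εU (AlgHom.id F _)).comp ΔU =
      Algebra.TensorProduct.includeRight := by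
    apply AlgHom.ext
    intro u
    induction u using U_induction with
    | hadd x y hx hy => rw [map_add, hx, hy, map_add]
    | hmul x y hx hy => rw [map_mul, hx, hy, map_mul]
    | hc c => simp only [AlgHom.commutes]
    | hι x =>
      have e1 := hΔU x
      have e2 := hεU x
      generalize UniversalEnvelopingAlgebra.ι F x = w at e1 e2 ⊢
      simp [e1, e2]
  exact congrArg AlgHom.toLinearMap this

theorem counit_U_right (εU : UniversalEnvelopingAlgebra F g →ₐ[F] F)
    (hεU : ∀ x : g, εU (UniversalEnvelopingAlgebra.ι F x) = 0)
    (ΔU : UniversalEnvelopingAlgebra F g →ₐ[F]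
      (UniversalEnvelopingAlgebra F g ⊗[F] UniversalEnvelopingAlgebra F g))
    (hΔU : ∀ x : g, ΔU (UniversalEnvelopingAlgebra.ι F x) =
      (UniversalEnvelopingAlgebra.ι F x) ⊗ₜ 1 + 1 ⊗ₜ (UniversalEnvelopingAlgebra.ι F x)) :
    εU.toLinearMap.lTensor _ ∘ₗ ΔU.toLinearMap = (TensorProduct.mk F _ F).flip 1 := by
  have : (Algebra.TensorProduct.map (AlgHom.id F _) εU).comp ΔU =
      Algebra.TensorProduct.includeLeft := by
    apply AlgHom.ext
    intro u
    induction u using U_induction with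
    | hadd x y hx hy => rw [map_add, hx, hy, map_add]
    | hmul x y hx hy => rw [map_mul, hx, hy, map_mul]
    | hc c => simp only [AlgHom.commutes]
    | hι x =>
      have e1 := hΔU x
      have e2 := hεU x
      generalize UniversalEnvelopingAlgebra.ι F x = w at e1 e2 ⊢
      simp [e1, e2]
  exact congrArg AlgHom.toLinearMap this

/-- An ordered basis adapted to the decomposition. -/
theorem exists_basis [FiniteDimensional F g] (m : Submodule F g) (h : LieSubalgebra F g)
    (hcompl : IsCompl m h.toSubmodule) :
    ∃ (n₁ n₂ : ℕ) (b : Module.Basis (Fin n₁ ⊕ₗ Fin n₂) F g) (S : Set (Fin n₁ ⊕ₗ Fin n₂)),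
      Submodule.span F (b '' S) = h.toSubmodule ∧ ∀ i ∉ S, ∀ j ∈ S, i ≤ j := by
  let bm := Module.finBasis F m
  let bh := Module.finBasis F h.toSubmodule
  let b0 := ((bm.prod bh).map (Submodule.prodEquivOfIsCompl _ _ hcompl)).reindex toLex
  refine ⟨_, _, b0, Set.range (fun i => toLex (Sum.inr i)), ?_, ?_⟩
  · have : b0 '' Set.range (fun i => toLex (Sum.inr i)) = h.toSubmodule.subtype '' Set.range bh := by
      rw [← Set.range_comp, ← Set.range_comp]
      congr 1
      funext i
      simp [b0]
    rw [this, ← Submodule.map_span, bh.span_eq, Submodule.map_subtype_top]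
  · rintro i hi j ⟨j, rfl⟩
    induction i using Lex.rec with
    | _ i =>
    rcases i with i | i
    · exact (Sum.Lex.inl_lt_inr i j).le
    · exact absurd ⟨i, rfl⟩ hi

end PBW

section

variable (k : Type*) [Field k]

/-- For a cocycle double cross sum Lie algebra `g = m ⋈_θ h` (i.e. `h` a
Lie subalgebra, `m` a complementary subspace), with `Ũ(m) := U(g)/U(g)U(h)⁺`, the
multiplication map `Ũ(m) ⊗ U(h) → U(g)` (induced by a PBW basis adapted to the
decomposition, i.e. of the form `t ⊗ v ↦ s(t)·v` for a linear section `s` of the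
quotient map) is an isomorphism of coalgebras, and consequently
`U(m ⋈_θ h) ≅ Ũ(m) ⋈_θ U(h)` as bialgebras: the multiplication transported along this
isomorphism is a cocycle double cross product multiplication. -/
theorem enveloping_algebra_cocycle_double_cross_product
    (g : Type*) [LieRing g] [LieAlgebra k g] [FiniteDimensional k g]
    (m : Submodule k g) (h : LieSubalgebra k g)
    (hcompl : IsCompl m h.toSubmodule)
    -- the standard bialgebra structure maps of `U(g)`
    (εU : UniversalEnvelopingAlgebra k g →ₐ[k] k)
    (hεU : ∀ x : g, εU (UniversalEnvelopingAlgebra.ι k x) = 0)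
    (ΔU : UniversalEnvelopingAlgebra k g →ₐ[k]
      (UniversalEnvelopingAlgebra k g ⊗[k] UniversalEnvelopingAlgebra k g))
    (hΔU : ∀ x : g, ΔU (UniversalEnvelopingAlgebra.ι k x) =
      (UniversalEnvelopingAlgebra.ι k x) ⊗ₜ 1 + 1 ⊗ₜ (UniversalEnvelopingAlgebra.ι k x))
    -- `U(h)` as the subalgebra of `U(g)` generated by `h`
    (Uh : Subalgebra k (UniversalEnvelopingAlgebra k g))
    (hUh : Uh = Algebra.adjoin k ((UniversalEnvelopingAlgebra.ι k (L := g)) '' h))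
    -- the left ideal `U(g)U(h)⁺`
    (J : Submodule k (UniversalEnvelopingAlgebra k g))
    (hJ : J = Submodule.span k
      {z | ∃ u v : UniversalEnvelopingAlgebra k g,
        v ∈ Uh ∧ εU v = 0 ∧ z = u * v})
    -- the induced coalgebra structures on `Ũ(m) = U(g)/J` and on `U(h)`
    (Δq : (UniversalEnvelopingAlgebra k g ⧸ J) →ₗ[k]
      (UniversalEnvelopingAlgebra k g ⧸ J) ⊗[k] (UniversalEnvelopingAlgebra k g ⧸ J))
    (hΔq : Δq ∘ₗ J.mkQ = (TensorProduct.map J.mkQ J.mkQ) ∘ₗ ΔU.toLinearMap)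
    (εq : (UniversalEnvelopingAlgebra k g ⧸ J) →ₗ[k] k)
    (hεq : εq ∘ₗ J.mkQ = εU.toLinearMap)
    (Δh : Uh →ₗ[k] (Uh ⊗[k] Uh))
    (hΔh : (TensorProduct.map Uh.val.toLinearMap Uh.val.toLinearMap) ∘ₗ Δh =
      ΔU.toLinearMap ∘ₗ Uh.val.toLinearMap) :
    ∃ (Ψ : ((UniversalEnvelopingAlgebra k g ⧸ J) ⊗[k] Uh) ≃ₗ[k]
          UniversalEnvelopingAlgebra k g)
      (s : (UniversalEnvelopingAlgebra k g ⧸ J) →ₗ[k] UniversalEnvelopingAlgebra k g),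
      -- `s` is a linear section of the quotient map (a PBW-adapted choice of
      -- representatives), and `Ψ` is the induced multiplication map
      (J.mkQ ∘ₗ s = LinearMap.id) ∧
      (∀ (t : UniversalEnvelopingAlgebra k g ⧸ J) (v : Uh),
        Ψ (t ⊗ₜ v) = s t * (v : UniversalEnvelopingAlgebra k g)) ∧
      -- `Ψ` is a morphism of coalgebras
      (ΔU.toLinearMap ∘ₗ Ψ.toLinearMap =
        (TensorProduct.map Ψ.toLinearMap Ψ.toLinearMap) ∘ₗ
          (TensorProduct.tensorTensorTensorComm k
            (UniversalEnvelopingAlgebra k g ⧸ J) (UniversalEnvelopingAlgebra k g ⧸ J)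
            Uh Uh).toLinearMap ∘ₗ
          (TensorProduct.map Δq Δh)) ∧
      (εU.toLinearMap ∘ₗ Ψ.toLinearMap =
        (TensorProduct.lid k k).toLinearMap ∘ₗ
          (TensorProduct.map εq (εU.toLinearMap ∘ₗ Uh.val.toLinearMap))) ∧
      -- consequently `U(g) ≅ Ũ(m) ⋈_θ U(h)` as bialgebras: the multiplication of
      -- `U(g)` transported along `Ψ` is a cocycle double cross product multiplication
      (∃ (act : (Uh ⊗[k] (UniversalEnvelopingAlgebra k g ⧸ J)) →ₗ[k]
            (UniversalEnvelopingAlgebra k g ⧸ J))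
         (ps : (Uh ⊗[k] (UniversalEnvelopingAlgebra k g ⧸ J)) →ₗ[k] Uh)
         (mM : ((UniversalEnvelopingAlgebra k g ⧸ J) ⊗[k]
            (UniversalEnvelopingAlgebra k g ⧸ J)) →ₗ[k]
            (UniversalEnvelopingAlgebra k g ⧸ J))
         (th : ((UniversalEnvelopingAlgebra k g ⧸ J) ⊗[k]
            (UniversalEnvelopingAlgebra k g ⧸ J)) →ₗ[k] Uh),
        Ψ.toLinearMap ∘ₗ
            cdcpMul k (UniversalEnvelopingAlgebra k g ⧸ J) Uh Δq Δh act ps mM th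
              (LinearMap.mul' k Uh) =
          (LinearMap.mul' k (UniversalEnvelopingAlgebra k g)) ∘ₗ
            (TensorProduct.map Ψ.toLinearMap Ψ.toLinearMap)) := by
  classical
  obtain ⟨n₁, n₂, b, S, hbS, hlt⟩ := PBW.exists_basis m h hcompl
  have hS : ∀ i ∈ S, ∀ j ∈ S, ⁅b i, b j⁆ ∈ Submodule.span k (b '' S) := by
    intro i hi j hj
    have hi' : b i ∈ Submodule.span k (b '' S) := Submodule.subset_span ⟨i, hi, rfl⟩
    have hj' : b j ∈ Submodule.span k (b '' S) := Submodule.subset_span ⟨j, hj, rfl⟩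
    rw [hbS] at hi' hj' ⊢
    exact h.lie_mem hi' hj'
  have hUh' : Uh = Algebra.adjoin k
      (UniversalEnvelopingAlgebra.ι k '' (Submodule.span k (b '' S) : Set g)) := by
    rw [hUh, hbS]; rfl
  obtain ⟨Ψ, s, hs1, hs2, hs3⟩ := PBW.exists_section b S hS hlt Uh hUh' εU ΔU hΔU J hJ
  have hπs : ∀ t, J.mkQ (s t) = t := fun t => LinearMap.congr_fun hs1 t
  have hsΔ : TensorProduct.map s s ∘ₗ Δq = ΔU.toLinearMap ∘ₗ s := by
    apply LinearMap.ext
    intro t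
    obtain ⟨w, hw⟩ := hs3 t
    have h1 := LinearMap.congr_fun hΔq (s t)
    simp only [LinearMap.comp_apply, hπs, AlgHom.toLinearMap_apply] at h1 ⊢
    rw [h1, ← hw]
    congr 1
    rw [← LinearMap.comp_apply, ← TensorProduct.map_comp, hs1, TensorProduct.map_id]
    rfl
  have hJmem : ∀ u (v : Uh), J.mkQ (u * v) = εU v • J.mkQ u := by
    intro u v
    rw [← map_smul, ← sub_eq_zero, ← map_sub, Submodule.mkQ_apply,
      Submodule.Quotient.mk_eq_zero, hJ]
    refine Submodule.subset_span ⟨u, v - algebraMap k _ (εU v), ?_, ?_, ?_⟩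
    · exact Subalgebra.sub_mem _ v.2 (Subalgebra.algebraMap_mem _ _)
    · simp
    · rw [mul_sub, ← Algebra.commutes, ← Algebra.smul_def]
  have c1 := PBW.coassoc_U ΔU hΔU
  have c2 := PBW.counit_U_left εU hεU ΔU hΔU
  have c3 := PBW.counit_U_right εU hεU ΔU hΔU
  let _ : Coalgebra k (UniversalEnvelopingAlgebra k g ⧸ J) :=
    CDCP.coalgOfSurj ΔU.toLinearMap Δq J.mkQ hΔq εU.toLinearMap εq hεq
      (Submodule.mkQ_surjective J) c1 c2 c3
  let _ : Coalgebra k Uh :=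
    CDCP.coalgOfInj Δh ΔU.toLinearMap Uh.val.toLinearMap hΔh.symm
      (εU.toLinearMap ∘ₗ Uh.val.toLinearMap) εU.toLinearMap rfl Subtype.val_injective c1 c2 c3
  have hΨ' : Ψ.toLinearMap = LinearMap.mul' k _ ∘ₗ TensorProduct.map s Uh.val.toLinearMap := by
    apply TensorProduct.ext'
    intro t v
    simp [hs2]
  refine ⟨Ψ, s, hs1, hs2, ?_, ?_, ?_⟩
  · rw [hΨ']
    exact CDCP.comul_mul ΔU s Uh.val.toLinearMap hsΔ hΔh
  · apply TensorProduct.ext'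
    intro t v
    have h1 := LinearMap.congr_fun hεq (s t)
    simp only [LinearMap.comp_apply, hπs, AlgHom.toLinearMap_apply] at h1
    simp [hs2, h1]
  · exact CDCP.cdcp_exists ΔU J.mkQ Uh.val s Ψ hΔh hsΔ hΔq hs2
      (fun t v => by
        have := hJmem (s t) v
        rw [hπs] at this
        exact this)

end
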